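/- Let i_1, …, i_k and j_1, …, j_k be two tuples of pairwise distinct natural numbers such that for all 1 ≤ n, m ≤ k one has (E i_n i_m ↔ E j_n j_m) and (i_n < i_m ↔ j_n < j_m). Then there exists an isomorphism of Boolean algebras g from the Boolean subalgebra of Set I generated by {u i_1, …, u i_k} onto the Boolean subalgebra generated by {u j_1, …, u j_k} such that g (u i_ℓ) = u j_ℓ for every 1 ≤ ℓ ≤ k. -/

import Mathlib

/-- The index set `I = {(n,m) : ℕ × ℕ | n ≤ m}`. -/
def I : Set (ℕ × ℕ) := {p | p.1 ≤ p.2}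

/-- The element `u n = {(n,m) | n ≤ m} ∪ {(m,n) | m < n ∧ E m n}` of the Boolean algebra `Set I`. -/
def u (E : ℕ → ℕ → Prop) (n : ℕ) : Set I :=
  {p : I | (p.val.1 = n ∧ n ≤ p.val.2) ∨ (p.val.2 = n ∧ p.val.1 < n ∧ E p.val.1 n)}

/-- A Boolean subalgebra of a Boolean algebra, i.e. a subset containing `⊥` and `⊤` and
closed under `⊓`, `⊔`, and complement. -/
def IsBoolSubalg {L : Type*} [BooleanAlgebra L] (B : Set L) : Prop :=
  ⊥ ∈ B ∧ ⊤ ∈ B ∧ (∀ x ∈ B, ∀ y ∈ B, x ⊓ y ∈ B) ∧ (∀ x ∈ B, ∀ y ∈ B, x ⊔ y ∈ B) ∧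
    ∀ x ∈ B, xᶜ ∈ B

/-- The Boolean subalgebra generated by a set: the smallest Boolean subalgebra containing it. -/
def boolGen {L : Type*} [BooleanAlgebra L] (S : Set L) : Set L :=
  ⋂₀ {B | IsBoolSubalg B ∧ S ⊆ B}

/-- `a` is an atom of the Boolean subalgebra `B`. -/
def IsAtomOfSet {L : Type*} [BooleanAlgebra L] (B : Set L) (a : L) : Prop :=
  a ∈ B ∧ a ≠ ⊥ ∧ ∀ b ∈ B, b ≤ a → b = ⊥ ∨ b = a

/-!
A point map `σ : I → I` whose preimage operation sends each `u (i ℓ)` to `u (j ℓ)` gives a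
homomorphism on all of `Set I` for free, and a second such map in the opposite direction makes it
bijective between the generated subalgebras, since the composites fix the generators. So it is
enough to match every point `(a, b)` of `I` with a point lying in exactly the corresponding
generators. If `(a, b) = (i n, i m)`, take `(j n, j m)`. Otherwise the indices `ℓ` with
`(a, b) ∈ u (i ℓ)` form a fibre of `i`, possibly empty, and the corresponding fibre of `j` is cut
out by a diagonal point.
-/

section BoolGen

variable {L M : Type*} [BooleanAlgebra L] [BooleanAlgebra M]

theorem boolGen_eq_coe_closure (S : Set L) : boolGen S = BooleanSubalgebra.closure S := by
  refine Set.Subset.antisymm (fun x hx ↦ hx _ ⟨⟨?_, ?_, ?_, ?_, ?_⟩, ?_⟩) fun x hx B hB ↦ ?_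
  · exact BooleanSubalgebra.bot_mem
  · exact BooleanSubalgebra.top_mem
  · exact fun _ hx _ hy ↦ BooleanSubalgebra.inf_mem hx hy
  · exact fun _ hx _ hy ↦ BooleanSubalgebra.sup_mem hx hy
  · exact fun _ hx ↦ BooleanSubalgebra.compl_mem hx
  · exact BooleanSubalgebra.subset_closure
  · obtain ⟨⟨hbot, -, hinf, hsup, hcompl⟩, hSB⟩ := hB
    let B' : BooleanSubalgebra L :=
      { carrier := B
        supClosed' := fun x hx y hy ↦ hsup x hx y hy
        infClosed' := fun x hx y hy ↦ hinf x hx y hy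
        compl_mem' := fun {x} hx ↦ hcompl x hx
        bot_mem' := hbot }
    exact BooleanSubalgebra.mem_closure.1 hx (L := B') hSB

theorem mapsTo_boolGen (φ : BoundedLatticeHom L M) {S : Set L} {T : Set M}
    (h : Set.MapsTo φ S T) : Set.MapsTo φ (boolGen S) (boolGen T) := by
  rw [boolGen_eq_coe_closure, boolGen_eq_coe_closure]
  have hS : S ⊆ (BooleanSubalgebra.closure T).comap φ :=
    fun x hx ↦ BooleanSubalgebra.subset_closure (h hx)
  exact BooleanSubalgebra.closure_le.2 hS

theorem eqOn_boolGen {φ ψ : BoundedLatticeHom L M} {S : Set L} (h : Set.EqOn φ ψ S) :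
    Set.EqOn φ ψ (boolGen S) := by
  rw [boolGen_eq_coe_closure]
  intro x hx
  induction hx using BooleanSubalgebra.closure_bot_sup_induction with
  | mem x hx => exact h hx
  | bot => rw [map_bot, map_bot]
  | sup x _ y _ hx hy => rw [map_sup, map_sup, hx, hy]
  | compl x _ hx => rw [map_compl', map_compl', hx]

theorem leftInvOn_boolGen {φ : BoundedLatticeHom L M} {ψ : BoundedLatticeHom M L} {S : Set L}
    (h : Set.LeftInvOn ψ φ S) : Set.LeftInvOn ψ φ (boolGen S) :=
  eqOn_boolGen (φ := ψ.comp φ) (ψ := BoundedLatticeHom.id L) h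

theorem bijOn_boolGen {φ : BoundedLatticeHom L M} {ψ : BoundedLatticeHom M L} {S : Set L}
    {T : Set M} (hinv : Set.InvOn ψ φ S T) (hφ : Set.MapsTo φ S T) (hψ : Set.MapsTo ψ T S) :
    Set.BijOn φ (boolGen S) (boolGen T) :=
  Set.InvOn.bijOn ⟨leftInvOn_boolGen hinv.1, leftInvOn_boolGen hinv.2⟩
    (mapsTo_boolGen φ hφ) (mapsTo_boolGen ψ hψ)

theorem bijOn_preimage_boolGen_range {α β ι : Type*} {s : ι → Set α} {t : ι → Set β}
    {σ : β → α} {τ : α → β} (hσ : ∀ ℓ, σ ⁻¹' s ℓ = t ℓ) (hτ : ∀ ℓ, τ ⁻¹' t ℓ = s ℓ) :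
    Set.BijOn (σ ⁻¹' ·) (boolGen (Set.range s)) (boolGen (Set.range t)) := by
  refine bijOn_boolGen (φ := (CompleteLatticeHom.setPreimage σ).toBoundedLatticeHom)
    (ψ := (CompleteLatticeHom.setPreimage τ).toBoundedLatticeHom) ⟨?_, ?_⟩ ?_ ?_
  · rintro _ ⟨ℓ, rfl⟩
    exact (congrArg (τ ⁻¹' ·) (hσ ℓ)).trans (hτ ℓ)
  · rintro _ ⟨ℓ, rfl⟩
    exact (congrArg (σ ⁻¹' ·) (hτ ℓ)).trans (hσ ℓ)
  · rintro _ ⟨ℓ, rfl⟩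
    exact ⟨ℓ, (hσ ℓ).symm⟩
  · rintro _ ⟨ℓ, rfl⟩
    exact ⟨ℓ, (hτ ℓ).symm⟩

end BoolGen

theorem eq_iff_eq_of_lt_iff_lt {ι α β : Type*} [LinearOrder α] [LinearOrder β] {f : ι → α}
    {g : ι → β} (h : ∀ n m, f n < f m ↔ g n < g m) (n m : ι) : f n = f m ↔ g n = g m := by
  rw [eq_iff_le_not_lt, eq_iff_le_not_lt, ← not_lt, ← not_lt, h, h]

theorem exists_forall_eq_iff_eq {ι α β : Type*} [Finite ι] [Infinite β] {f : ι → α} {g : ι → β}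
    (h : ∀ n m, f n = f m ↔ g n = g m) (c : α) : ∃ d, ∀ ℓ, g ℓ = d ↔ f ℓ = c := by
  by_cases hc : c ∈ Set.range f
  · obtain ⟨n, rfl⟩ := hc
    exact ⟨g n, fun ℓ ↦ (h ℓ n).symm⟩
  · obtain ⟨d, hd⟩ := (Set.finite_range g).exists_notMem
    exact ⟨d, fun ℓ ↦ iff_of_false (fun hℓ ↦ hd ⟨ℓ, hℓ⟩) fun hℓ ↦ hc ⟨ℓ, hℓ⟩⟩

section Generators

variable {ι : Type*} {E F : ℕ → ℕ → Prop} {i j : ι → ℕ}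

theorem mem_u_iff {n : ℕ} {p : I} : p ∈ u E n ↔ n = p.1.1 ∨ n = p.1.2 ∧ E p.1.1 p.1.2 := by
  obtain ⟨⟨a, b⟩, hab : a ≤ b⟩ := p
  change (a = n ∧ n ≤ b ∨ b = n ∧ a < n ∧ E a n) ↔ n = a ∨ n = b ∧ E a b
  constructor
  · rintro (⟨rfl, -⟩ | ⟨rfl, -, hE⟩)
    · exact Or.inl rfl
    · exact Or.inr ⟨rfl, hE⟩
  · rintro (rfl | ⟨rfl, hE⟩)
    · exact Or.inl ⟨rfl, hab⟩
    · exact hab.eq_or_lt.imp (fun h ↦ ⟨h, le_rfl⟩) fun h ↦ ⟨rfl, h, hE⟩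

theorem diag_mem_u_iff {n d : ℕ} : (⟨(d, d), le_refl d⟩ : I) ∈ u E n ↔ n = d := by
  rw [mem_u_iff]
  exact or_iff_left_of_imp And.left

theorem mem_range_and_mem_range_or_forall_mem_u_iff (E : ℕ → ℕ → Prop) (i : ι → ℕ) (p : I) :
    (p.1.1 ∈ Set.range i ∧ p.1.2 ∈ Set.range i) ∨ ∃ c, ∀ ℓ, p ∈ u E (i ℓ) ↔ i ℓ = c := by
  simp only [mem_u_iff]
  by_cases hfst : p.1.1 ∈ Set.range i
  · by_cases hsnd : p.1.2 ∈ Set.range i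
    · exact Or.inl ⟨hfst, hsnd⟩
    · exact Or.inr ⟨p.1.1, fun ℓ ↦ or_iff_left fun h ↦ hsnd ⟨ℓ, h.1⟩⟩
  · right
    by_cases hE : E p.1.1 p.1.2
    · exact ⟨p.1.2, fun ℓ ↦ (or_iff_right fun h ↦ hfst ⟨ℓ, h⟩).trans (and_iff_left hE)⟩
    · exact ⟨p.1.1, fun ℓ ↦ or_iff_left fun h ↦ hE h.2⟩

theorem exists_forall_mem_u_iff_mem_u [Finite ι] (hE : ∀ n m, E (i n) (i m) ↔ F (j n) (j m))
    (hord : ∀ n m, i n < i m ↔ j n < j m) (p : I) :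
    ∃ q : I, ∀ ℓ, q ∈ u F (j ℓ) ↔ p ∈ u E (i ℓ) := by
  have heq := eq_iff_eq_of_lt_iff_lt hord
  obtain ⟨⟨n, hn⟩, ⟨m, hm⟩⟩ | ⟨c, hc⟩ := mem_range_and_mem_range_or_forall_mem_u_iff E i p
  · have hle : i n ≤ i m := hn ▸ hm ▸ p.2
    have hle' : j n ≤ j m := by rwa [← not_lt, ← hord, not_lt]
    exact ⟨⟨(j n, j m), hle'⟩, fun ℓ ↦ by simp only [mem_u_iff, ← hn, ← hm, heq, hE]⟩
  · obtain ⟨d, hd⟩ := exists_forall_eq_iff_eq heq c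
    exact ⟨⟨(d, d), le_refl d⟩, fun ℓ ↦ diag_mem_u_iff.trans ((hd ℓ).trans (hc ℓ).symm)⟩

theorem exists_preimage_u_eq [Finite ι] (hE : ∀ n m, E (i n) (i m) ↔ F (j n) (j m))
    (hord : ∀ n m, i n < i m ↔ j n < j m) : ∃ τ : I → I, ∀ ℓ, τ ⁻¹' u F (j ℓ) = u E (i ℓ) := by
  choose τ hτ using exists_forall_mem_u_iff_mem_u hE hord
  exact ⟨τ, fun ℓ ↦ Set.ext fun p ↦ hτ p ℓ⟩

end Generators

theorem subalgebra_isomorphism_general {ι : Type*} [Finite ι] (E F : ℕ → ℕ → Prop) (i j : ι → ℕ)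
    (hE : ∀ n m, E (i n) (i m) ↔ F (j n) (j m)) (hord : ∀ n m, i n < i m ↔ j n < j m) :
    ∃ σ : I → I,
      Set.BijOn (σ ⁻¹' ·) (boolGen (Set.range fun ℓ ↦ u E (i ℓ)))
        (boolGen (Set.range fun ℓ ↦ u F (j ℓ))) ∧
      ∀ ℓ, σ ⁻¹' u E (i ℓ) = u F (j ℓ) := by
  obtain ⟨τ, hτ⟩ := exists_preimage_u_eq hE hord
  obtain ⟨σ, hσ⟩ := exists_preimage_u_eq (fun n m ↦ (hE n m).symm) fun n m ↦ (hord n m).symm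
  exact ⟨σ, bijOn_preimage_boolGen_range hσ hτ, hσ⟩

/-- If `(i 1, …, i k)` and `(j 1, …, j k)` are tuples of pairwise distinct natural numbers with
the same quantifier-free type in the ordered graph (same edges and same relative order), then
there is an isomorphism of Boolean algebras from the Boolean subalgebra of `Set I` generated by
`{u (i 1), …, u (i k)}` onto the one generated by `{u (j 1), …, u (j k)}` sending each
`u (i ℓ)` to `u (j ℓ)`. -/
theorem subalgebra_isomorphism (E : ℕ → ℕ → Prop)
    (hsym : ∀ a b, E a b → E b a) (hirr : ∀ a, ¬ E a a)
    (k : ℕ) (i j : Fin k → ℕ)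
    (hi : Function.Injective i) (hj : Function.Injective j)
    (hE : ∀ n m : Fin k, E (i n) (i m) ↔ E (j n) (j m))
    (hord : ∀ n m : Fin k, i n < i m ↔ j n < j m) :
    ∃ g : Set I → Set I,
      Set.BijOn g (boolGen (Set.range fun ℓ => u E (i ℓ)))
        (boolGen (Set.range fun ℓ => u E (j ℓ))) ∧
      (∀ x ∈ boolGen (Set.range fun ℓ => u E (i ℓ)),
        ∀ y ∈ boolGen (Set.range fun ℓ => u E (i ℓ)), g (x ∩ y) = g x ∩ g y) ∧
      (∀ x ∈ boolGen (Set.range fun ℓ => u E (i ℓ)),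
        ∀ y ∈ boolGen (Set.range fun ℓ => u E (i ℓ)), g (x ∪ y) = g x ∪ g y) ∧
      (∀ x ∈ boolGen (Set.range fun ℓ => u E (i ℓ)), g xᶜ = (g x)ᶜ) ∧
      g ∅ = ∅ ∧ g Set.univ = Set.univ ∧
      ∀ ℓ : Fin k, g (u E (i ℓ)) = u E (j ℓ) := by
  obtain ⟨σ, hbij, hσ⟩ := subalgebra_isomorphism_general E E i j hE hord
  exact ⟨(σ ⁻¹' ·), hbij, fun _ _ _ _ ↦ rfl, fun _ _ _ _ ↦ rfl, fun _ _ ↦ rfl, rfl, rfl, hσ⟩
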